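/- Let 2 ≤ T < S < n and λ > 0, and condition on an outcome of M_n for which there is a set B of size n − S with {1,…,S} ⊆ B ⊆ {1,…,n} such that M_n[{S+1,…,n}, B] is λ-heavy. Then with probability at least 1 − 5S·2^{−T} − e^{−S/40}, there is a set B' of size n + 5S − T with {1,…,T} ⊆ B' ⊆ {1,…,n+5S} such that M_{n+5S}[{T+1,…,n+5S}, B'] is (λ/2^{S−T})-heavy. -/

import Mathlib

/-!
Expose the rows and columns `n, n + 1, …` one at a time, each index `a` bringing a fresh random
vector that is both the new row and the new column. The state after `m` exposures is a number `s`
such that the leading `m × m` block has a heavy submatrix consisting of the rows `s ≤ i < m` and of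
`m - s` columns that include the first `s`, so that `s` columns are unused.

* With probability at least `1 - 2 ^ (-s)` the number `s` persists with the same heaviness.
  Expanding along the new row, adding that row and an unused column `j` gives the permanent
  `± p + g`, where `p` is the old heavy permanent, the sign is the `j`-th new entry and `g` does not
  depend on the new entries at unused columns. Hence at most one sign is bad for each `j`.
* With probability at least `1 / 4` the number `s` drops by one, at the cost of a factor `2`. Adding
  both the new row and the new column makes the permanent a quadratic polynomial in the new signs,
  and by polarization one of the four choices of the `u`-th and `v`-th signs makes it at least as
  large as the mixed coefficient of these two. With `t = s - 1` and two unused columns `j` and `k`,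
  the available mixed coefficients are `q t + q j`, `q t + q k` and `q j + q k`, where `q t` is the
  old heavy permanent; one of them is at least `|q t| / 2`.

The target `s = T` is therefore missed with probability at most `5 S 2 ^ (-T)` plus the probability
of fewer than `S - T` successes in `5 S` trials with success probability `1 / 4`.
-/

open Finset

/-- The real number (`1` or `-1`) associated to a Boolean: a Rademacher value. -/
noncomputable def rad (b : Bool) : ℝ := if b then 1 else -1

/-- The permanent of the submatrix of `M` with row set `A` and column set `B`,
defined as a sum over all bijections between `A` and `B` (it equals `0` if
`A.card ≠ B.card`). Since the permanent is invariant under row and column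
permutations, this faithfully represents `per M[A,B]`. -/
noncomputable def permOn {m n : ℕ} (M : Matrix (Fin m) (Fin n) ℝ)
    (A : Finset (Fin m)) (B : Finset (Fin n)) : ℝ :=
  ∑ σ : {x // x ∈ A} ≃ {y // y ∈ B}, ∏ i : {x // x ∈ A}, M i.1 (σ i).1

/-- The random symmetric extension of a fixed `n' × n'` matrix `M` to an `n × n` matrix:
the top-left `n' × n'` block is `M`, and the remaining entries are Rademacher values
determined symmetrically by the Boolean data `ω`. As `ω` ranges uniformly over all Boolean
data, the new entries (on and above the diagonal) are i.i.d. Rademacher random variables. -/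
noncomputable def extSym {n' : ℕ} (n : ℕ) (M : Matrix (Fin n') (Fin n') ℝ)
    (ω : Fin n → Fin n → Bool) : Matrix (Fin n) (Fin n) ℝ :=
  fun i j =>
    if h : (i : ℕ) < n' ∧ (j : ℕ) < n' then M ⟨i, h.1⟩ ⟨j, h.2⟩
    else if i ≤ j then rad (ω i j) else rad (ω j i)

open Classical in
/-- The probability of the event `P` for the random symmetric extension of `M` to size `n`
(i.e. conditionally on the outcome `M` for the top-left block). -/
noncomputable def probExt {n' : ℕ} (n : ℕ) (M : Matrix (Fin n') (Fin n') ℝ)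
    (P : Matrix (Fin n) (Fin n) ℝ → Prop) : ℝ :=
  ((univ.filter fun ω : Fin n → Fin n → Bool => P (extSym n M ω)).card : ℝ) / 2 ^ (n * n)

open scoped BigOperators

section Permanent

lemma sum_equiv_option {α β R : Type*} [Fintype α] [DecidableEq α] [Fintype β] [DecidableEq β]
    [AddCommMonoid R] (F : β → (α → β) → R) :
    ∑ e : Option α ≃ β, F (e none) (e ∘ some) =
      ∑ b, ∑ e : α ≃ {y : β // y ≠ b}, F b (Subtype.val ∘ e) := by
  rw [← (Equiv.sigmaFiberEquiv fun e : Option α ≃ β => e none).sum_comp, Fintype.sum_sigma]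
  refine sum_congr rfl fun b _ => Fintype.sum_equiv (Equiv.optionSubtype b) _ _ ?_
  rintro ⟨e, rfl⟩
  rfl

variable {m n : ℕ} {M M' : Matrix (Fin m) (Fin n) ℝ} {A : Finset (Fin m)} {B : Finset (Fin n)}

lemma permOn_congr (h : ∀ i ∈ A, ∀ j ∈ B, M i j = M' i j) : permOn M A B = permOn M' A B :=
  sum_congr rfl fun σ _ => prod_congr rfl fun i _ => h _ i.2 _ (σ i).2

lemma permOn_transpose : permOn M.transpose B A = permOn M A B :=
  Fintype.sum_equiv ⟨Equiv.symm, Equiv.symm, fun _ => rfl, fun _ => rfl⟩ _ _ fun σ =>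
    Fintype.prod_equiv σ _ _ fun i => by simp [Matrix.transpose]

lemma permOn_map {m' n' : ℕ} (f : Fin m' ↪ Fin m) (g : Fin n' ↪ Fin n) (A : Finset (Fin m'))
    (B : Finset (Fin n')) : permOn M (A.map f) (B.map g) = permOn (M.submatrix f g) A B := by
  refine (Fintype.sum_equiv (Equiv.equivCongr (A.equivMap f) (B.equivMap g)) _ _ fun σ => ?_).symm
  exact Fintype.prod_equiv (A.equivMap f) _ _ fun i => by simp

lemma permOn_insert_row {r : Fin m} (hr : r ∉ A) :
    permOn M (insert r A) B = ∑ b ∈ B, M r b * permOn M A (B.erase b) := by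
  have h_option : permOn M (insert r A) B = ∑ e : Option A ≃ B,
      M r (e none) * ∏ i : A, M i ((e ∘ some) i) := by
    refine Fintype.sum_equiv
      (Equiv.equivCongr (subtypeInsertEquivOption hr) (Equiv.refl _)) _ _ fun σ => ?_
    rw [← (subtypeInsertEquivOption hr).symm.prod_comp, Fintype.prod_option]
    simp [subtypeInsertEquivOption]
  have h_erase (b : B) : permOn M A (B.erase b) =
      ∑ e : A ≃ {y : B // y ≠ b}, ∏ i : A, M i (e i).1 := by
    let toErase : {y : B // y ≠ b} ≃ B.erase b.1 :=
      { toFun := fun y => ⟨y.1, mem_erase.2 ⟨fun h => y.2 (Subtype.ext h), y.1.2⟩⟩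
        invFun := fun y => ⟨⟨y.1, mem_of_mem_erase y.2⟩,
          fun h => ne_of_mem_erase y.2 (congrArg Subtype.val h)⟩
        left_inv := fun _ => rfl
        right_inv := fun _ => rfl }
    exact (Fintype.sum_equiv (Equiv.equivCongr (Equiv.refl _) toErase) _ _ fun _ => rfl).symm
  rw [h_option, sum_equiv_option fun (b : B) (f : A → B) => M r b * ∏ i : A, M i (f i),
    ← sum_coe_sort B]
  simp only [h_erase, mul_sum, Function.comp_apply]

lemma permOn_insert_col {c : Fin n} (hc : c ∉ B) :
    permOn M A (insert c B) = ∑ i ∈ A, M i c * permOn M (A.erase i) B := by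
  rw [← permOn_transpose, permOn_insert_row hc]
  exact sum_congr rfl fun i _ => by rw [permOn_transpose, Matrix.transpose_apply]

lemma permOn_updateRow_of_notMem {r : Fin m} (hr : r ∉ A) (w : Fin n → ℝ) :
    permOn (M.updateRow r w) A B = permOn M A B :=
  permOn_congr fun _ hi _ _ => by rw [Matrix.updateRow_ne (ne_of_mem_of_not_mem hi hr)]

lemma permOn_updateCol_of_notMem {c : Fin n} (hc : c ∉ B) (w : Fin m → ℝ) :
    permOn (M.updateCol c w) A B = permOn M A B :=
  permOn_congr fun _ _ _ hj => by rw [Matrix.updateCol_ne (ne_of_mem_of_not_mem hj hc)]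

lemma permOn_updateRow_insert {r : Fin m} (hr : r ∉ A) (w : Fin n → ℝ) :
    permOn (M.updateRow r w) (insert r A) B = ∑ b ∈ B, w b * permOn M A (B.erase b) := by
  simp only [permOn_insert_row hr, Matrix.updateRow_self, permOn_updateRow_of_notMem hr]

lemma permOn_updateCol_insert {c : Fin n} (hc : c ∉ B) (w : Fin m → ℝ) :
    permOn (M.updateCol c w) A (insert c B) = ∑ i ∈ A, w i * permOn M (A.erase i) B := by
  simp only [permOn_insert_col hc, Matrix.updateCol_self, permOn_updateCol_of_notMem hc]

end Permanent

section UniformProbability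

open Classical in
/-- The probability of the event `P` under the uniform distribution on the finite type `α`. -/
noncomputable def unifProb {α : Type*} [Fintype α] (P : α → Prop) : ℝ := 𝔼 x, if P x then 1 else 0

section Basic

variable {α β : Type*} [Fintype α] [Fintype β] {P Q : α → Prop}

open Classical in
lemma unifProb_eq_card_div : unifProb P = #{x | P x} / Fintype.card α := by
  rw [unifProb, Fintype.expect_eq_sum_div_card, sum_boole]

lemma unifProb_nonneg : 0 ≤ unifProb P :=
  expect_nonneg fun x _ => by split_ifs <;> norm_num

lemma unifProb_mono (h : ∀ x, P x → Q x) : unifProb P ≤ unifProb Q :=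
  expect_le_expect fun x _ => by split_ifs <;> simp_all

lemma unifProb_of_forall [Nonempty α] (h : ∀ x, P x) : unifProb P = 1 := by
  simp [unifProb, h]

lemma unifProb_not [Nonempty α] : unifProb (fun x => ¬ P x) = 1 - unifProb P := by
  rw [eq_sub_iff_add_eq, unifProb, unifProb, ← expect_add_distrib]
  refine (expect_congr rfl fun x _ => ?_).trans (Fintype.expect_const (1 : ℝ))
  split_ifs <;> simp

lemma unifProb_comp_equiv (e : β ≃ α) : unifProb (fun y => P (e y)) = unifProb P :=
  Fintype.expect_equiv e _ _ fun _ => rfl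

lemma expect_le_sub_add_unifProb [Nonempty α] {f : α → ℝ} {b c : ℝ} (hf : ∀ x, f x ≤ 1)
    (hc : 0 ≤ c) (hP : ∀ x, P x → f x ≤ c) (hQ : ∀ x, Q x → f x ≤ b) :
    𝔼 x, f x ≤ c - unifProb Q * (c - b) + unifProb (fun x => ¬ P x) := by
  classical
  have h_pointwise (x : α) :
      f x ≤ c - (if Q x then 1 else 0) * (c - b) + if ¬ P x then 1 else 0 := by
    by_cases hPx : P x <;> by_cases hQx : Q x <;>
      simp only [hPx, hQx, not_true, not_false_eq_true, if_true, if_false]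
    · linarith [hQ x hQx]
    · linarith [hP x hPx]
    · linarith [hQ x hQx]
    · linarith [hf x]
  calc 𝔼 x, f x
      ≤ 𝔼 x, (c - (if Q x then 1 else 0) * (c - b) + if ¬ P x then 1 else 0) :=
        expect_le_expect fun x _ => h_pointwise x
    _ = c - unifProb Q * (c - b) + unifProb fun x => ¬ P x := by
        rw [expect_add_distrib, expect_sub_distrib, ← expect_mul, Fintype.expect_const,
          unifProb, unifProb]
        congr!

end Basic

section Product

variable {ι C : Type*} [Fintype ι] [DecidableEq ι] [Fintype C]

lemma expect_update [Nonempty C] (a : ι) (f : (ι → C) → ℝ) :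
    𝔼 ω : ι → C, 𝔼 x, f (Function.update ω a x) = 𝔼 ω, f ω := by
  let swapAt (p : (ι → C) × C) : (ι → C) × C := (Function.update p.1 a p.2, p.1 a)
  have h_invol : Function.Involutive swapAt := fun p => by simp [swapAt]
  calc 𝔼 ω : ι → C, 𝔼 x, f (Function.update ω a x)
      = 𝔼 p : (ι → C) × C, f (swapAt p).1 :=
        (expect_product univ univ fun p : (ι → C) × C => f (swapAt p).1).symm
    _ = 𝔼 p : (ι → C) × C, f p.1 :=
        Fintype.expect_equiv h_invol.toPerm _ _ fun _ => rfl
    _ = 𝔼 ω, f ω :=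
        (expect_product univ univ fun p : (ι → C) × C => f p.1).trans (by simp)

lemma unifProb_exists_update_le [Nonempty C] (a : ι) (P : (ι → C) → Prop) :
    unifProb (fun ω => ∃ x, P (Function.update ω a x)) ≤ Fintype.card C * unifProb P := by
  classical
  calc unifProb (fun ω => ∃ x, P (Function.update ω a x))
      ≤ 𝔼 ω : ι → C, ∑ x, if P (Function.update ω a x) then 1 else 0 := by
        refine expect_le_expect fun ω _ => ?_
        split_ifs with h
        · obtain ⟨x, hx⟩ := h
          refine le_trans (by rw [if_pos hx]) (single_le_sum (fun y _ => ?_) (mem_univ x))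
          split_ifs <;> norm_num
        · exact sum_nonneg fun x _ => by split_ifs <;> norm_num
    _ = Fintype.card C * 𝔼 ω : ι → C, 𝔼 x, if P (Function.update ω a x) then 1 else 0 := by
        simp only [mul_expect, Fintype.expect_eq_sum_div_card (ι := C)]
        field_simp
    _ = Fintype.card C * unifProb P := by
        rw [expect_update a fun ω => if P ω then (1 : ℝ) else 0, unifProb]

lemma one_le_card_sq_mul_unifProb [Nonempty C] (a b : ι) {P : (ι → C) → Prop}
    (h : ∀ ω, ∃ x y, P (Function.update (Function.update ω a x) b y)) :
    1 ≤ (Fintype.card C : ℝ) ^ 2 * unifProb P := by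
  calc (1 : ℝ) = unifProb (fun ω => ∃ x y, P (Function.update (Function.update ω a x) b y)) :=
        (unifProb_of_forall h).symm
    _ ≤ Fintype.card C * unifProb (fun ω => ∃ y, P (Function.update ω b y)) :=
        unifProb_exists_update_le a fun ω => ∃ y, P (Function.update ω b y)
    _ ≤ Fintype.card C * (Fintype.card C * unifProb P) := by
        gcongr
        exact unifProb_exists_update_le b P
    _ = _ := by ring

lemma unifProb_le_of_eq_of_eqOn_compl [Nonempty C] (J : Finset ι) {P : (ι → C) → Prop}
    (h : ∀ x y, P x → P y → (∀ i ∉ J, x i = y i) → x = y) :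
    unifProb P ≤ (1 / Fintype.card C) ^ #J := by
  classical
  have h_card : #{x | P x} ≤ Fintype.card C ^ #Jᶜ := by
    calc #{x | P x} ≤ #(univ : Finset ((Jᶜ : Finset ι) → C)) := by
          refine card_le_card_of_injOn (fun x i => x i) (fun _ _ => mem_coe.2 (mem_univ _)) ?_
          intro x hx y hy hxy
          rw [mem_coe, mem_filter_univ] at hx hy
          exact h x y hx hy fun i hi => congrFun hxy ⟨i, mem_compl.2 hi⟩
      _ = Fintype.card C ^ #Jᶜ := by rw [card_univ, Fintype.card_fun, Fintype.card_coe]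
  have : (0 : ℝ) < Fintype.card C := by exact_mod_cast Fintype.card_pos
  rw [unifProb_eq_card_div, Fintype.card_fun, ← card_compl_add_card J, div_le_iff₀ (by positivity)]
  calc (#{x | P x} : ℝ) ≤ (Fintype.card C : ℝ) ^ #Jᶜ := by exact_mod_cast h_card
    _ = (1 / Fintype.card C) ^ #J * ((Fintype.card C ^ (#Jᶜ + #J) : ℕ) : ℝ) := by
        push_cast
        rw [pow_add, one_div, inv_pow]
        field_simp

end Product

end UniformProbability

section BinomialTail

/-- The lower tail `ℙ(X < d)` of a binomial variable `X` with parameters `k` and `p`, defined by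
conditioning on one trial. -/
noncomputable def binomialTail (p : ℝ) : ℕ → ℕ → ℝ
  | _, 0 => 0
  | 0, _ + 1 => 1
  | k + 1, d + 1 => p * binomialTail p k d + (1 - p) * binomialTail p k (d + 1)

variable {p : ℝ}

lemma binomialTail_nonneg (hp0 : 0 ≤ p) (hp1 : p ≤ 1) (k d : ℕ) : 0 ≤ binomialTail p k d := by
  have : 0 ≤ 1 - p := sub_nonneg.2 hp1
  fun_induction binomialTail p k d <;> positivity

lemma binomialTail_le_succ (hp0 : 0 ≤ p) (hp1 : p ≤ 1) (k d : ℕ) :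
    binomialTail p k d ≤ binomialTail p k (d + 1) := by
  have : 0 ≤ 1 - p := sub_nonneg.2 hp1
  induction k generalizing d with
  | zero => cases d <;> simp [binomialTail]
  | succ k ih =>
    cases d with
    | zero => simpa only [binomialTail] using binomialTail_nonneg hp0 hp1 (k + 1) 1
    | succ d =>
      simp only [binomialTail]
      gcongr
      exacts [ih d, ih (d + 1)]

/-- Chernoff's bound: the base on the right is the expectation of `r⁻¹ ^ X` for one trial `X`. -/
lemma binomialTail_le_pow {r : ℝ} (hp0 : 0 ≤ p) (hp1 : p ≤ 1) (hr : 1 ≤ r) (k d : ℕ) :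
    binomialTail p k d ≤ r ^ d * (p / r + (1 - p)) ^ k := by
  have : 0 ≤ 1 - p := sub_nonneg.2 hp1
  have : 0 < r := one_pos.trans_le hr
  induction k generalizing d with
  | zero => cases d <;> simp [binomialTail, one_le_pow₀ hr]
  | succ k ih =>
    cases d with
    | zero =>
      simp only [binomialTail]
      positivity
    | succ d =>
      calc binomialTail p (k + 1) (d + 1)
          ≤ p * (r ^ d * (p / r + (1 - p)) ^ k) +
              (1 - p) * (r ^ (d + 1) * (p / r + (1 - p)) ^ k) := by
            rw [binomialTail]
            gcongr
            exacts [ih d, ih (d + 1)]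
        _ = r ^ (d + 1) * (p / r + (1 - p)) ^ (k + 1) := by
            rw [pow_succ r, pow_succ (p / r + (1 - p))]
            field_simp

end BinomialTail

section Descent

variable {N : ℕ} {C : Type*} [Fintype C]

/-- A process driven by independent uniform coordinates `ω 0, ω 1, …`, which are exposed in this
order starting from time `n`. The event `H m d` says that at time `m` the process is alive and `d`
descents away from its goal. An exposure destroys the state with probability at most `ε`
and achieves a descent with probability at least `p`, whatever happened before. As the coordinates
`≥ m` are resampled later, `H m d` is not required to be independent of them. -/
structure IsDescent (H : ℕ → ℕ → (Fin N → C) → Prop) (n : ℕ) (ε p : ℝ) : Prop where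
  stay : ∀ a : Fin N, n ≤ a → ∀ d ω, H a d ω →
    unifProb (fun x => ¬ H (a + 1) d (Function.update ω a x)) ≤ ε
  descend : ∀ a : Fin N, n ≤ a → ∀ d ω, H a (d + 1) ω →
    p ≤ unifProb fun x => H (a + 1) d (Function.update ω a x)

namespace IsDescent

variable {H : ℕ → ℕ → (Fin N → C) → Prop} {n : ℕ} {ε p : ℝ} {Φ : (Fin N → C) → ℝ}
  [Nonempty C]

lemma expect_update_le (h : IsDescent H n ε p) (hp0 : 0 ≤ p) (hp1 : p ≤ 1) {a : Fin N}
    (ha : n ≤ a) {k : ℕ} (hΦ : ∀ ω, Φ ω ≤ 1)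
    (hH : ∀ d ω, H (a + 1) d ω → Φ ω ≤ k * ε + binomialTail p k d) {d : ℕ} {ω : Fin N → C}
    (hω : H a d ω) :
    𝔼 x, Φ (Function.update ω a x) ≤ (k + 1 : ℕ) * ε + binomialTail p (k + 1) d := by
  have h_stay := h.stay a ha d ω hω
  have hε : 0 ≤ ε := unifProb_nonneg.trans h_stay
  have h_nonneg : 0 ≤ k * ε + binomialTail p k d :=
    add_nonneg (by positivity) (binomialTail_nonneg hp0 hp1 k d)
  push_cast
  cases d with
  | zero =>
    have h_le := expect_le_sub_add_unifProb (fun x => hΦ (Function.update ω a x)) h_nonneg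
      (fun x => hH 0 _) (fun x => hH 0 _)
    simp only [binomialTail] at h_le ⊢
    linarith
  | succ d =>
    have h_le := expect_le_sub_add_unifProb (fun x => hΦ (Function.update ω a x)) h_nonneg
      (fun x => hH (d + 1) _) (fun x => hH d _)
    have h_gain := mul_le_mul_of_nonneg_right (h.descend a ha d ω hω)
      (sub_nonneg.2 (binomialTail_le_succ hp0 hp1 k d))
    simp only [add_sub_add_left_eq_sub] at h_le
    rw [binomialTail]
    linarith

lemma expect_le (h : IsDescent H n ε p) (hp0 : 0 ≤ p) (hp1 : p ≤ 1) {j k d : ℕ}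
    (hN : n + j ≤ N) (hΦ : ∀ ω, Φ ω ≤ 1)
    (hH : ∀ d ω, H (n + j) d ω → Φ ω ≤ k * ε + binomialTail p k d) (h_init : ∀ ω, H n d ω) :
    𝔼 ω, Φ ω ≤ (j + k : ℕ) * ε + binomialTail p (j + k) d := by
  induction j generalizing k Φ with
  | zero => simpa using expect_le univ_nonempty fun ω _ => hH d ω (h_init ω)
  | succ j ih =>
    let a : Fin N := ⟨n + j, by omega⟩
    rw [← expect_update a, show j + 1 + k = j + (k + 1) by ring]
    exact ih (by omega) (fun ω => expect_le univ_nonempty fun x _ => hΦ _)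
      fun d ω hω => h.expect_update_le hp0 hp1 (a := a) (by simp [a]) hΦ hH hω

lemma unifProb_not_le (h : IsDescent H n ε p) (hp0 : 0 ≤ p) (hp1 : p ≤ 1) {k d : ℕ}
    (hN : n + k ≤ N) (h_init : ∀ ω, H n d ω) :
    unifProb (fun ω => ¬ H (n + k) 0 ω) ≤ k * ε + binomialTail p k d := by
  refine h.expect_le hp0 hp1 (k := 0) hN (fun ω => ?_) (fun d ω hω => ?_) h_init
  · split_ifs <;> norm_num
  · cases d with
    | zero => simp [hω, binomialTail]
    | succ d =>
      simp only [binomialTail]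
      split_ifs <;> norm_num

end IsDescent

end Descent

section Border

lemma abs_rad (b : Bool) : |rad b| = 1 := by cases b <;> simp [rad]

lemma eq_of_abs_rad_mul_add_lt {b c : Bool} {p g μ : ℝ} (hp : μ ≤ |p|)
    (hb : |rad b * p + g| < μ) (hc : |rad c * p + g| < μ) : b = c := by
  by_contra hbc
  have h_opp : rad c = -rad b := by cases b <;> cases c <;> simp_all [rad]
  have h_diff : |(rad b * p + g) - (rad c * p + g)| = 2 * |p| := by
    rw [h_opp, show rad b * p + g - (-rad b * p + g) = 2 * rad b * p by ring, abs_mul, abs_mul,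
      abs_rad, abs_two, mul_one]
  linarith [abs_sub (rad b * p + g) (rad c * p + g)]

/-- The matrix `A` with its row `a` and its column `a` both replaced by the vector `y`. -/
def border {N : ℕ} (A : Matrix (Fin N) (Fin N) ℝ) (a : Fin N) (y : Fin N → ℝ) :
    Matrix (Fin N) (Fin N) ℝ :=
  (A.updateCol a y).updateRow a y

variable {N : ℕ} (A : Matrix (Fin N) (Fin N) ℝ) {a : Fin N} {R B U : Finset (Fin N)}

lemma permOn_border_insert_row (haR : a ∉ R) (haB : a ∉ B) (y : Fin N → ℝ) :
    permOn (border A a y) (insert a R) B = ∑ b ∈ B, y b * permOn A R (B.erase b) := by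
  rw [border, permOn_updateRow_insert haR]
  simp only [permOn_updateCol_of_notMem fun h => haB (mem_of_mem_erase h)]

lemma permOn_border_insert_row_col (haR : a ∉ R) (haU : a ∉ U) (y : Fin N → ℝ) :
    permOn (border A a y) (insert a R) (insert a U) =
      y a * permOn A R U +
        ∑ i ∈ U, ∑ r ∈ R, y i * permOn A (R.erase r) (U.erase i) * y r := by
  rw [border, permOn_updateRow_insert haR, sum_insert haU, erase_insert haU,
    permOn_updateCol_of_notMem haU]
  congr 1
  refine sum_congr rfl fun i hi => ?_
  rw [erase_insert_of_ne (ne_of_mem_of_not_mem hi haU).symm,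
    permOn_updateCol_insert fun h => haU (mem_of_mem_erase h), mul_sum]
  exact sum_congr rfl fun r _ => by ring

variable {A}

/-- Each column `j ∈ J` fails for exactly one value of the sign `x j`, given the signs outside
`J`. -/
lemma unifProb_border_insert_row_le {μ : ℝ} {J : Finset (Fin N)} (haR : a ∉ R) (haB : a ∉ B)
    (haJ : a ∉ J) (hJB : Disjoint J B) (hμ : μ ≤ |permOn A R B|) :
    unifProb (fun x : Fin N → Bool =>
      ∀ j ∈ J, |permOn (border A a (rad ∘ x)) (insert a R) (insert j B)| < μ) ≤ (1 / 2) ^ #J := by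
  have h_expand {x : Fin N → Bool} {j : Fin N} (hj : j ∈ J) :
      permOn (border A a (rad ∘ x)) (insert a R) (insert j B) =
        rad (x j) * permOn A R B + ∑ b ∈ B, rad (x b) * permOn A R ((insert j B).erase b) := by
    have hjB := disjoint_left.1 hJB hj
    have ha_ins : a ∉ insert j B := by
      simp [haB, (ne_of_mem_of_not_mem hj haJ).symm]
    rw [permOn_border_insert_row A haR ha_ins, sum_insert hjB, erase_insert hjB]
    rfl
  refine (unifProb_le_of_eq_of_eqOn_compl J fun x y hx hy hxy => ?_).trans (by simp)
  funext j
  by_cases hj : j ∈ J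
  · have hxj := hx j hj
    have hyj := hy j hj
    rw [h_expand hj] at hxj hyj
    have h_rest : ∑ b ∈ B, rad (x b) * permOn A R ((insert j B).erase b) =
        ∑ b ∈ B, rad (y b) * permOn A R ((insert j B).erase b) :=
      sum_congr rfl fun b hb => by rw [hxy b (disjoint_right.1 hJB hb)]
    exact eq_of_abs_rad_mul_add_lt hμ (h_rest ▸ hxj) hyj
  · exact hxy j hj

lemma exists_abs_add_le_abs_rad_smul {E : Type*} [AddCommGroup E] [Module ℝ E]
    (b : LinearMap.BilinForm ℝ E) (z e e' : E) (κ : ℝ) :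
    ∃ s t, |b e e' + b e' e| ≤
      |κ + b (z + rad s • e + rad t • e') (z + rad s • e + rad t • e')| := by
  set f : Bool → Bool → ℝ :=
    fun s t => κ + b (z + rad s • e + rad t • e') (z + rad s • e + rad t • e')
  have h_polar : f true true - f true false - f false true + f false false =
      4 * (b e e' + b e' e) := by
    simp [f, rad]
    ring
  by_contra! h_lt
  have h_sum := congrArg abs h_polar
  rw [abs_mul, abs_of_pos (four_pos (α := ℝ))] at h_sum
  linarith [abs_add_le (f true true - f true false - f false true) (f false false),
    abs_sub (f true true - f true false) (f false true), abs_sub (f true true) (f true false),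
    h_lt true true, h_lt true false, h_lt false true, h_lt false false]

lemma rad_comp_update_update {ι : Type*} [DecidableEq ι] {u v : ι} (huv : u ≠ v) (x : ι → Bool)
    (s t : Bool) :
    rad ∘ Function.update (Function.update x u s) v t =
      Function.update (Function.update (rad ∘ x) u 0) v 0 + rad s • Pi.single u 1 +
        rad t • Pi.single v 1 := by
  funext i
  rcases eq_or_ne i v with rfl | hiv
  · simp [huv.symm]
  rcases eq_or_ne i u with rfl | hiu
  · simp [hiv]
  · simp [hiu, hiv]

lemma unifProb_border_insert_row_col_ge {u v : Fin N} {μ : ℝ} (haR : a ∉ R) (haU : a ∉ U)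
    (huv : u ≠ v) (hu : u ∈ R ∩ U) (hv : v ∈ R ∩ U)
    (hμ : μ ≤ |permOn A (R.erase u) (U.erase v) + permOn A (R.erase v) (U.erase u)|) :
    1 / 4 ≤ unifProb fun x : Fin N → Bool =>
      μ ≤ |permOn (border A a (rad ∘ x)) (insert a R) (insert a U)| := by
  obtain ⟨huR, huU⟩ := mem_inter.1 hu
  obtain ⟨hvR, hvU⟩ := mem_inter.1 hv
  let b : LinearMap.BilinForm ℝ (Fin N → ℝ) := Matrix.toBilin' <| Matrix.of fun i r =>
    if i ∈ U ∧ r ∈ R then permOn A (R.erase r) (U.erase i) else 0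
  have h_quadratic (y : Fin N → ℝ) : permOn (border A a y) (insert a R) (insert a U) =
      y a * permOn A R U + b y y := by
    simp only [permOn_border_insert_row_col A haR haU, b, Matrix.toBilin'_apply, Matrix.of_apply,
      ite_and, mul_ite, ite_mul, mul_zero, zero_mul, sum_ite_irrel, sum_const_zero, sum_ite_mem,
      univ_inter]
  have h_coeff : b (Pi.single v 1) (Pi.single u 1) + b (Pi.single u 1) (Pi.single v 1) =
      permOn A (R.erase u) (U.erase v) + permOn A (R.erase v) (U.erase u) := by
    simp [b, Matrix.toBilin'_single, huR, huU, hvR, hvU]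
  have h_exists (x : Fin N → Bool) : ∃ s t, μ ≤ |permOn
      (border A a (rad ∘ Function.update (Function.update x u s) v t)) (insert a R)
        (insert a U)| := by
    obtain ⟨s, t, hst⟩ := exists_abs_add_le_abs_rad_smul b
      (Function.update (Function.update (rad ∘ x) u 0) v 0) (Pi.single u 1) (Pi.single v 1)
      (rad (x a) * permOn A R U)
    refine ⟨s, t, hμ.trans ?_⟩
    rw [← h_coeff, add_comm, h_quadratic, rad_comp_update_update huv]
    simpa [ne_of_mem_of_not_mem huU haU |>.symm, ne_of_mem_of_not_mem hvU haU |>.symm] using hst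
  have h_four := one_le_card_sq_mul_unifProb (P := fun x : Fin N → Bool =>
    μ ≤ |permOn (border A a (rad ∘ x)) (insert a R) (insert a U)|) u v h_exists
  norm_num at h_four
  linarith

end Border

section HeavyBlock

/-- The set of indices `i : Fin N` with `s ≤ i < m`, for `N` not necessarily at least `m`. -/
def indexIco (N s m : ℕ) : Finset (Fin N) := {i | s ≤ (i : ℕ) ∧ (i : ℕ) < m}

lemma mem_indexIco {N s m : ℕ} {i : Fin N} :
    i ∈ indexIco N s m ↔ s ≤ (i : ℕ) ∧ (i : ℕ) < m := by
  simp [indexIco]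

lemma card_indexIco {N s m : ℕ} (hm : m ≤ N) : #(indexIco N s m) = m - s := by
  have h_lt : ∀ i ∈ Ico s m, i < N := fun i hi => (mem_Ico.1 hi).2.trans_le hm
  rw [← Nat.card_Ico, ← card_attachFin (Ico s m) h_lt]
  congr 1
  ext i
  simp [mem_indexIco]

lemma right_notMem_indexIco {N s : ℕ} {a : Fin N} : a ∉ indexIco N s a :=
  fun h => lt_irrefl _ (mem_indexIco.1 h).2

lemma indexIco_succ_right {N s : ℕ} {a : Fin N} (hs : s ≤ a) :
    indexIco N s (a + 1) = insert a (indexIco N s a) := by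
  ext i
  simp only [mem_indexIco, mem_insert, Fin.ext_iff]
  omega

lemma indexIco_erase_left {N m : ℕ} (t : Fin N) :
    (indexIco N t m).erase t = indexIco N (t + 1) m := by
  ext i
  simp only [mem_indexIco, mem_erase, ne_eq, Fin.ext_iff]
  omega

lemma map_castLEEmb_indexIco {n N s m : ℕ} (hn : n ≤ N) (hm : m ≤ n) :
    (indexIco n s m).map (Fin.castLEEmb hn) = indexIco N s m := by
  ext i
  simp only [mem_map, mem_indexIco, Fin.castLEEmb_apply]
  constructor
  · rintro ⟨j, hj, rfl⟩
    exact hj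
  · exact fun hi => ⟨⟨i, hi.2.trans_le hm⟩, hi, rfl⟩

/-- The leading `m × m` block of `A` has a set `B` of `m - s` columns, containing the first `s`
columns, such that the submatrix of `A` with columns `B` and all but the first `s` of the `m` rows
is `μ`-heavy. -/
def HasHeavyBlock {N : ℕ} (A : Matrix (Fin N) (Fin N) ℝ) (m s : ℕ) (μ : ℝ) : Prop :=
  ∃ B ⊆ indexIco N 0 m, indexIco N 0 s ⊆ B ∧ #B + s = m ∧ μ ≤ |permOn A (indexIco N s m) B|

variable {N m s : ℕ} {A A' : Matrix (Fin N) (Fin N) ℝ} {μ : ℝ}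

lemma hasHeavyBlock_self_iff (hs : s ≤ N) :
    HasHeavyBlock A N s μ ↔ ∃ B : Finset (Fin N), #B = N - s ∧ (∀ i : Fin N, (i : ℕ) < s → i ∈ B) ∧
      μ ≤ |permOn A (univ.filter fun i : Fin N => s ≤ (i : ℕ)) B| := by
  have h_rows : indexIco N s N = univ.filter fun i : Fin N => s ≤ (i : ℕ) := by
    ext i
    simp [mem_indexIco]
  refine exists_congr fun B => ?_
  have h_card : #B + s = N ↔ #B = N - s := by omega
  simp only [h_rows, h_card, subset_iff, mem_indexIco, Nat.zero_le, true_and, Fin.is_lt,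
    implies_true]
  tauto

lemma HasHeavyBlock.congr (h : HasHeavyBlock A m s μ)
    (hA : ∀ i j : Fin N, (i : ℕ) < m → (j : ℕ) < m → A i j = A' i j) :
    HasHeavyBlock A' m s μ := by
  obtain ⟨B, hBm, hsB, hcard, hμ⟩ := h
  refine ⟨B, hBm, hsB, hcard, hμ.trans_eq (congrArg abs (permOn_congr fun i hi j hj => ?_))⟩
  exact hA i j (mem_indexIco.1 hi).2 (mem_indexIco.1 (hBm hj)).2

lemma HasHeavyBlock.of_submatrix_castLE {n : ℕ} (hn : n ≤ N) (hm : m ≤ n)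
    (h : HasHeavyBlock (A.submatrix (Fin.castLE hn) (Fin.castLE hn)) m s μ) :
    HasHeavyBlock A m s μ := by
  obtain ⟨B, hBm, hsB, hcard, hμ⟩ := h
  have hs : s ≤ n := by omega
  refine ⟨B.map (Fin.castLEEmb hn), ?_, ?_, by rwa [card_map], ?_⟩
  · rwa [← map_castLEEmb_indexIco hn hm, map_subset_map]
  · rwa [← map_castLEEmb_indexIco hn hs, map_subset_map]
  · rw [← map_castLEEmb_indexIco hn hm, permOn_map]
    exact hμ

lemma card_indexIco_sdiff {B : Finset (Fin N)} (hm : m ≤ N) (hBm : B ⊆ indexIco N 0 m)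
    (hcard : #B + s = m) : #(indexIco N 0 m \ B) = s := by
  rw [card_sdiff_of_subset hBm, card_indexIco hm]
  omega

lemma HasHeavyBlock.unifProb_not_border_le {a : Fin N} (h : HasHeavyBlock A a s μ) :
    unifProb (fun x : Fin N → Bool => ¬ HasHeavyBlock (border A a (rad ∘ x)) (a + 1) s μ) ≤
      (1 / 2) ^ s := by
  obtain ⟨B, hBa, hsB, hcard, hμ⟩ := h
  have hsa : s ≤ a := by omega
  have h_fail := unifProb_border_insert_row_le (J := indexIco N 0 a \ B) right_notMem_indexIco
    (fun h => right_notMem_indexIco (hBa h)) (fun h => right_notMem_indexIco (mem_sdiff.1 h).1)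
    sdiff_disjoint hμ
  rw [card_indexIco_sdiff a.is_lt.le hBa hcard] at h_fail
  refine (unifProb_mono fun x hx j hj => lt_of_not_ge fun hj_heavy => hx ?_).trans h_fail
  obtain ⟨hja, hjB⟩ := mem_sdiff.1 hj
  rw [← indexIco_succ_right hsa] at hj_heavy
  refine ⟨insert j B, ?_, hsB.trans (subset_insert j B), ?_, hj_heavy⟩
  · rw [indexIco_succ_right (Nat.zero_le _)]
    exact (insert_subset hja hBa).trans (subset_insert _ _)
  · rw [card_insert_of_notMem hjB]
    omega

lemma exists_half_abs_le_abs_add {ι : Type*} (q : ι → ℝ) {t j k : ι} (htj : t ≠ j) (htk : t ≠ k)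
    (hjk : j ≠ k) :
    ∃ u v, (u = t ∨ u = j ∨ u = k) ∧ (v = t ∨ v = j ∨ v = k) ∧ u ≠ v ∧ |q t| / 2 ≤ |q u + q v| := by
  by_contra! h_lt
  have h_tj := h_lt t j (by simp) (by simp) htj
  have h_tk := h_lt t k (by simp) (by simp) htk
  have h_jk := h_lt j k (by simp) (by simp) hjk
  have h_sum : |2 * q t| ≤ |q t + q j| + |q t + q k| + |q j + q k| := by
    rw [show 2 * q t = q t + q j + (q t + q k) - (q j + q k) by ring]
    exact (abs_sub _ _).trans (add_le_add_left (abs_add_le _ _) _)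
  rw [abs_mul, abs_two] at h_sum
  linarith [abs_nonneg (q t)]

lemma exists_half_abs_permOn_le {R E : Finset (Fin N)} {t j k : Fin N} (htj : t ≠ j) (htk : t ≠ k)
    (hjk : j ≠ k) (ht : t ∈ R \ E) (hj : j ∈ R \ E) (hk : k ∈ R \ E) :
    ∃ u ∈ R \ E, ∃ v ∈ R \ E, u ≠ v ∧
      |permOn A (R.erase t) (insert t E)| / 2 ≤
        |permOn A (R.erase u) ((insert u (insert v E)).erase v) +
          permOn A (R.erase v) ((insert u (insert v E)).erase u)| := by
  obtain ⟨u, v, hu, hv, huv, h_half⟩ :=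
    exists_half_abs_le_abs_add (fun l => permOn A (R.erase l) (insert l E)) htj htk hjk
  have hu' : u ∈ R \ E := by rcases hu with rfl | rfl | rfl <;> assumption
  have hv' : v ∈ R \ E := by rcases hv with rfl | rfl | rfl <;> assumption
  refine ⟨u, hu', v, hv', huv, ?_⟩
  rwa [erase_insert_of_ne huv, erase_insert (mem_sdiff.1 hv').2, erase_insert]
  simp [huv, (mem_sdiff.1 hu').2]

lemma HasHeavyBlock.exists_half_le_abs_add (hm : m ≤ N) (hs : 1 ≤ s)
    (h : HasHeavyBlock A m (s + 1) μ) :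
    ∃ U ⊆ indexIco N 0 m, indexIco N 0 s ⊆ U ∧ #U + s = m ∧
      ∃ u ∈ indexIco N s m ∩ U, ∃ v ∈ indexIco N s m ∩ U, u ≠ v ∧
        μ / 2 ≤ |permOn A ((indexIco N s m).erase u) (U.erase v) +
          permOn A ((indexIco N s m).erase v) (U.erase u)| := by
  obtain ⟨B, hBm, hsB, hcard, hμ⟩ := h
  let t : Fin N := ⟨s, by omega⟩
  have ht : (t : ℕ) = s := rfl
  have htB : t ∈ B := hsB (mem_indexIco.2 (by omega))
  obtain ⟨j, hj, k, hk, hjk⟩ := one_lt_card.1 <|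
    (by omega : 1 < s + 1).trans_eq (card_indexIco_sdiff hm hBm hcard).symm
  have h_spare {l : Fin N} (hl : l ∈ indexIco N 0 m \ B) :
      t ≠ l ∧ l ∈ indexIco N s m \ B.erase t := by
    obtain ⟨hlm, hlB⟩ := mem_sdiff.1 hl
    have hsl : s + 1 ≤ l := not_lt.1 fun h_lt => hlB (hsB (mem_indexIco.2 ⟨Nat.zero_le _, h_lt⟩))
    exact ⟨ne_of_mem_of_not_mem htB hlB, mem_sdiff.2
      ⟨mem_indexIco.2 ⟨by omega, (mem_indexIco.1 hlm).2⟩, fun h => hlB (mem_of_mem_erase h)⟩⟩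
  obtain ⟨u, hu, v, hv, huv, h_half⟩ := exists_half_abs_permOn_le (A := A)
    (h_spare hj).1 (h_spare hk).1 hjk
    (mem_sdiff.2 ⟨mem_indexIco.2 (by omega), notMem_erase t B⟩) (h_spare hj).2 (h_spare hk).2
  rw [← ht, indexIco_erase_left, insert_erase htB, ht] at h_half
  obtain ⟨huR, huE⟩ := mem_sdiff.1 hu
  obtain ⟨hvR, hvE⟩ := mem_sdiff.1 hv
  have h_initial : indexIco N s m ⊆ indexIco N 0 m := fun l hl =>
    mem_indexIco.2 ⟨Nat.zero_le _, (mem_indexIco.1 hl).2⟩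
  refine ⟨insert u (insert v (B.erase t)), ?_, fun l hl => ?_, ?_, u, by simp [huR], v,
    by simp [hvR], huv, (div_le_div_of_nonneg_right hμ two_pos.le).trans h_half⟩
  · exact insert_subset (h_initial huR)
      (insert_subset (h_initial hvR) ((erase_subset t B).trans hBm))
  · have hls := (mem_indexIco.1 hl).2
    have hlB : l ∈ B := hsB (mem_indexIco.2 ⟨Nat.zero_le _, by omega⟩)
    have hlt : l ≠ t := fun h => by omega
    simp [hlt, hlB]
  · rw [card_insert_of_notMem (by simp [huv, huE]), card_insert_of_notMem hvE,
      card_erase_add_one htB]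
    omega

lemma HasHeavyBlock.le_unifProb_border {a : Fin N} (hs : 1 ≤ s) (h : HasHeavyBlock A a (s + 1) μ) :
    1 / 4 ≤ unifProb fun x : Fin N → Bool =>
      HasHeavyBlock (border A a (rad ∘ x)) (a + 1) s (μ / 2) := by
  obtain ⟨U, hUa, hsU, hcard, u, hu, v, hv, huv, hμ⟩ := h.exists_half_le_abs_add a.is_lt.le hs
  have haU : a ∉ U := fun h => right_notMem_indexIco (hUa h)
  have h_prob := unifProb_border_insert_row_col_ge right_notMem_indexIco haU huv hu hv hμ
  rw [← indexIco_succ_right (by omega)] at h_prob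
  refine h_prob.trans (unifProb_mono fun x hx => ⟨insert a U, ?_, ?_, ?_, hx⟩)
  · rw [indexIco_succ_right (Nat.zero_le _)]
    exact insert_subset_insert a hUa
  · exact hsU.trans (subset_insert a U)
  · rw [card_insert_of_notMem haU]
    omega

end HeavyBlock

section Extension

variable {n N T : ℕ} {M : Matrix (Fin n) (Fin n) ℝ} {κ : ℝ}

/-- The transposition of the data makes the new column `a` depend on the coordinate `ω a` alone. -/
lemma border_extSym_swap_eq (M : Matrix (Fin n) (Fin n) ℝ) {a : Fin N} (ha : n ≤ a)
    (ω : Fin N → Fin N → Bool) (x : Fin N → Bool) {i j : Fin N} (hi : (i : ℕ) < a + 1)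
    (hj : (j : ℕ) < a + 1) :
    border (extSym N M (Function.swap ω)) a (rad ∘ x) i j =
      extSym N M (Function.swap (Function.update ω a x)) i j := by
  have hia : i ≤ a := Nat.lt_succ_iff.1 hi
  have hja : j ≤ a := Nat.lt_succ_iff.1 hj
  rcases eq_or_ne i a with rfl | hia'
  · rcases hja.eq_or_lt with rfl | hlt
    · simp [border, extSym, Function.swap, ha.not_gt]
    · simp [border, extSym, Function.swap, ha.not_gt, hlt.not_ge]
  · rcases eq_or_ne j a with rfl | hja'
    · simp [border, extSym, Function.swap, ha.not_gt, hia, hia']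
    · simp [border, extSym, Function.swap, hia', hja']

lemma isDescent_hasHeavyBlock_extSym (hT : 1 ≤ T) :
    IsDescent (fun m d ω => HasHeavyBlock (extSym N M (Function.swap ω)) m (T + d) (κ * 2 ^ d))
      n ((1 / 2) ^ T) (1 / 4) where
  stay a ha d ω h :=
    calc _ ≤ unifProb fun x : Fin N → Bool => ¬ HasHeavyBlock
            (border (extSym N M (Function.swap ω)) a (rad ∘ x)) (a + 1) (T + d) (κ * 2 ^ d) :=
          unifProb_mono fun x hx hb =>
            hx (hb.congr fun _ _ => border_extSym_swap_eq M ha ω x)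
      _ ≤ (1 / 2) ^ (T + d) := h.unifProb_not_border_le
      _ ≤ (1 / 2) ^ T := pow_le_pow_of_le_one (by norm_num) (by norm_num) (T.le_add_right d)
  descend a ha d ω h := by
    refine (HasHeavyBlock.le_unifProb_border (hT.trans (T.le_add_right d)) h).trans
      (unifProb_mono fun x hb => ?_)
    rw [pow_succ, ← mul_assoc, mul_div_cancel_right₀ _ two_ne_zero] at hb
    exact hb.congr fun _ _ => border_extSym_swap_eq M ha ω x

lemma probExt_eq_unifProb (M : Matrix (Fin n) (Fin n) ℝ) (P : Matrix (Fin N) (Fin N) ℝ → Prop) :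
    probExt N M P = unifProb fun ω => P (extSym N M ω) := by
  rw [probExt, unifProb_eq_card_div]
  simp [pow_mul]

lemma probExt_eq_unifProb_swap (M : Matrix (Fin n) (Fin n) ℝ)
    (P : Matrix (Fin N) (Fin N) ℝ → Prop) :
    probExt N M P = unifProb fun ω => P (extSym N M (Function.swap ω)) :=
  (probExt_eq_unifProb M P).trans (unifProb_comp_equiv (Equiv.piComm fun _ _ => Bool)).symm

lemma submatrix_castLE_extSym (hn : n ≤ N) (ω : Fin N → Fin N → Bool) :
    (extSym N M ω).submatrix (Fin.castLE hn) (Fin.castLE hn) = M := by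
  ext i j
  simp [extSym]

lemma le_probExt_hasHeavyBlock {k d : ℕ} (hT : 1 ≤ T)
    (h : HasHeavyBlock M n (T + d) (κ * 2 ^ d)) :
    1 - (k * (1 / 2) ^ T + binomialTail (1 / 4) k d) ≤
      probExt (n + k) M fun M' => HasHeavyBlock M' (n + k) T κ := by
  have h_init (ω : Fin (n + k) → Fin (n + k) → Bool) :
      HasHeavyBlock (extSym (n + k) M (Function.swap ω)) n (T + d) (κ * 2 ^ d) := by
    refine .of_submatrix_castLE (n.le_add_right k) le_rfl ?_
    rwa [submatrix_castLE_extSym]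
  have h_fail := (isDescent_hasHeavyBlock_extSym hT).unifProb_not_le (by norm_num) (by norm_num)
    le_rfl h_init
  rw [unifProb_not] at h_fail
  rw [probExt_eq_unifProb_swap]
  simpa using sub_le_comm.1 h_fail

end Extension

/-- Chernoff's bound with `r = 5 / 4` has base `19 / 20`, and
`5 / 4 * (19 / 20) ^ 5 ≤ 1 - 1 / 40`. -/
lemma binomialTail_quarter_le_exp {S d : ℕ} (hd : d ≤ S) :
    binomialTail (1 / 4) (5 * S) d ≤ Real.exp (-(S : ℝ) / 40) :=
  calc binomialTail (1 / 4) (5 * S) d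
      ≤ (5 / 4) ^ d * (1 / 4 / (5 / 4) + (1 - 1 / 4)) ^ (5 * S) :=
        binomialTail_le_pow (by norm_num) (by norm_num) (by norm_num) _ _
    _ ≤ (5 / 4) ^ S * (1 / 4 / (5 / 4) + (1 - 1 / 4)) ^ (5 * S) := by
        gcongr
        norm_num
    _ = (5 / 4 * (19 / 20) ^ 5) ^ S := by
        rw [pow_mul, ← mul_pow]
        norm_num
    _ ≤ Real.exp (-1 / 40) ^ S := by
        gcongr
        linarith [Real.add_one_le_exp (-1 / 40)]
    _ = Real.exp (-(S : ℝ) / 40) := by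
        rw [← Real.exp_nat_mul]
        congr 1
        ring

theorem iterative_growth_general (n S T : ℕ) (hT : 1 ≤ T) (hTS : T ≤ S) (hSn : S ≤ n) (lam : ℝ)
    (M : Matrix (Fin n) (Fin n) ℝ)
    (hB : ∃ B : Finset (Fin n), B.card = n - S ∧ (∀ i : Fin n, (i : ℕ) < S → i ∈ B) ∧
      lam ≤ |permOn M (univ.filter fun i : Fin n => S ≤ (i : ℕ)) B|) :
    1 - 5 * (S : ℝ) * (1 / 2 : ℝ) ^ T - Real.exp (-(S : ℝ) / 40) ≤
      probExt (n + 5 * S) M fun M' => ∃ B' : Finset (Fin (n + 5 * S)),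
        B'.card = n + 5 * S - T ∧ (∀ i : Fin (n + 5 * S), (i : ℕ) < T → i ∈ B') ∧
        lam / 2 ^ (S - T) ≤
          |permOn M' (univ.filter fun i : Fin (n + 5 * S) => T ≤ (i : ℕ)) B'| := by
  have h_start : HasHeavyBlock M n (T + (S - T)) (lam / 2 ^ (S - T) * 2 ^ (S - T)) := by
    rw [Nat.add_sub_cancel' hTS, div_mul_cancel₀ _ (by positivity)]
    exact (hasHeavyBlock_self_iff hSn).2 hB
  have h_tail := binomialTail_quarter_le_exp (S.sub_le T)
  have h_prob := le_probExt_hasHeavyBlock (k := 5 * S) hT h_start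
  simp only [hasHeavyBlock_self_iff (by omega : T ≤ n + 5 * S)] at h_prob
  push_cast at h_prob
  linarith

/-- Iterative growth step: let `2 ≤ T < S < n` and `λ > 0`, and condition on a symmetric
`±1` outcome of `M_n` having a set `B` of size `n - S` with `{1,…,S} ⊆ B` such that
`M_n[{S+1,…,n}, B]` is `λ`-heavy. Then with probability at least
`1 - 5S·2^(-T) - e^(-S/40)` over the random extension to size `n + 5S`, there is a set `B'`
of size `n + 5S - T` with `{1,…,T} ⊆ B' ⊆ {1,…,n+5S}` such that
`M_{n+5S}[{T+1,…,n+5S}, B']` is `λ/2^(S-T)`-heavy. -/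
theorem iterative_growth (n S T : ℕ) (hT : 2 ≤ T) (hTS : T < S) (hSn : S < n)
    (lam : ℝ) (hlam : 0 < lam)
    (M : Matrix (Fin n) (Fin n) ℝ) (hsym : M.IsSymm)
    (hsign : ∀ i j, M i j = 1 ∨ M i j = -1)
    (hB : ∃ B : Finset (Fin n), B.card = n - S ∧ (∀ i : Fin n, (i : ℕ) < S → i ∈ B) ∧
      lam ≤ |permOn M (univ.filter fun i : Fin n => S ≤ (i : ℕ)) B|) :
    1 - 5 * (S : ℝ) * (1 / 2 : ℝ) ^ T - Real.exp (-(S : ℝ) / 40) ≤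
      probExt (n + 5 * S) M fun M' => ∃ B' : Finset (Fin (n + 5 * S)),
        B'.card = n + 5 * S - T ∧ (∀ i : Fin (n + 5 * S), (i : ℕ) < T → i ∈ B') ∧
        lam / 2 ^ (S - T) ≤
          |permOn M' (univ.filter fun i : Fin (n + 5 * S) => T ≤ (i : ℕ)) B'| :=
  iterative_growth_general n S T (one_le_two.trans hT) hTS.le hSn.le lam M hB
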